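/- In the setting below, suppose ℓ ≥ 2τK₀, |ε| ≤ 1/(2K₂), and suppose z is in addition twice differentiable on (−3/2, 0) with the function H(u) = F(z(u)) satisfying |H′(u)| ≤ l₁ and |H″(u)| ≤ l₂ for all u ∈ (−3/2, 0). Then for all w₁, w₂ ∈ C^{0,ℓ}_0([0,1/2]), d(G_{w₁}, G_{w₂}) = sup_{t∈(0,1/2)} |G_{w₁}′(t) − G_{w₂}′(t)| ≤ |ε| 𝐋 d(w₁, w₂), where 𝐋 = (1 + |ε|ℓ) l₂/2 + l₁. -/

import Mathlib

/-- The distance `d(f,g) = sup_{t ∈ (0,1/2)} |f'(t) - g'(t)|`. -/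
noncomputable def dd (f g : ℝ → ℝ) : ℝ :=
  ⨆ t : Set.Ioo (0 : ℝ) (1 / 2), |deriv f t.1 - deriv g t.1|

/-- `f ∈ C^{0,ℓ}([a,b])`: continuous on `[a,b]`, differentiable on `(a,b)` with `|f'| ≤ ℓ`. -/
def memC (a b ℓ : ℝ) (f : ℝ → ℝ) : Prop :=
  ContinuousOn f (Set.Icc a b) ∧
    ∀ t ∈ Set.Ioo a b, DifferentiableAt ℝ f t ∧ |deriv f t| ≤ ℓ

/-- `f ∈ C^{0,ℓ}_0([0,1/2])` with prescribed value `c` at `0` and sup-norm bound `K₂`. -/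
def mem0 (ℓ K₂ c : ℝ) (f : ℝ → ℝ) : Prop :=
  memC 0 (1 / 2) ℓ f ∧ f 0 = c ∧ ∀ t ∈ Set.Icc (0 : ℝ) (1 / 2), |f t| ≤ K₂

/-- The operator `O_z(w)(t) = z(0) + τ ∫₀ᵗ F (z (s - 1 + ε w s)) ds`. -/
noncomputable def Oz (τ ε : ℝ) (F z w : ℝ → ℝ) : ℝ → ℝ := fun t =>
  z 0 + τ * ∫ s in (0 : ℝ)..t, F (z (s - 1 + ε * w s))

/-!
By the chain rule, `(H ∘ φ)' = φ' · (H' ∘ φ)` with `φ s = s - 1 + ε w s`, and the bound on `ε w`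
keeps `φ` inside `(-3/2, 0)`. In the difference of two such products, the factor `H'` varies by at
most `l₂ |φ₁ - φ₂| = l₂ |ε| |w₁ - w₂|` and the factor `φ'` by `|ε| |w₁' - w₂'|`. Because `w₁` and
`w₂` agree at `0`, the mean value inequality on an interval of length `1/2` gives
`|w₁ - w₂| ≤ d(w₁, w₂) / 2`, which is the origin of the `1/2` in `𝐋`.
-/

section MeanValue

variable {E : Type*} [NormedAddCommGroup E] [NormedSpace ℝ E] {f g : ℝ → E} {a b t : ℝ} {C : NNReal}

theorem lipschitzOnWith_Icc_of_nnnorm_deriv_le (hf : ContinuousOn f (Set.Icc a b))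
    (hf' : ∀ s ∈ Set.Ioo a b, DifferentiableAt ℝ f s)
    (bound : ∀ s ∈ Set.Ioo a b, ‖deriv f s‖₊ ≤ C) : LipschitzOnWith C f (Set.Icc a b) := by
  rcases eq_or_ne a b with rfl | hab
  · simp [LipschitzOnWith]
  · rw [← closure_Ioo hab] at hf ⊢
    exact ((convex_Ioo a b).lipschitzOnWith_of_nnnorm_deriv_le hf' bound).closure hf

theorem norm_sub_le_of_nnnorm_deriv_sub_le
    (hf : ContinuousOn f (Set.Icc a b)) (hg : ContinuousOn g (Set.Icc a b))
    (hf' : ∀ s ∈ Set.Ioo a b, DifferentiableAt ℝ f s)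
    (hg' : ∀ s ∈ Set.Ioo a b, DifferentiableAt ℝ g s) (hfg : f a = g a)
    (bound : ∀ s ∈ Set.Ioo a b, ‖deriv f s - deriv g s‖₊ ≤ C) (ht : t ∈ Set.Icc a b) :
    ‖f t - g t‖ ≤ C * (t - a) := by
  have bound_sub : ∀ s ∈ Set.Ioo a b, ‖deriv (f - g) s‖₊ ≤ C := fun s hs => by
    rw [deriv_sub (hf' s hs) (hg' s hs)]
    exact bound s hs
  have hlip : LipschitzOnWith C (f - g) (Set.Icc a b) :=
    lipschitzOnWith_Icc_of_nnnorm_deriv_le (hf.sub hg)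
      (fun s hs => (hf' s hs).sub (hg' s hs)) bound_sub
  simpa only [Pi.sub_apply, hfg, sub_self, sub_zero, Real.norm_of_nonneg (sub_nonneg.2 ht.1)] using
    hlip.norm_sub_le ht (Set.left_mem_Icc.2 (ht.1.trans ht.2))

end MeanValue

theorem norm_smul_sub_smul_le {R E : Type*} [SeminormedRing R] [SeminormedAddCommGroup E]
    [Module R E] [IsBoundedSMul R E] (a b : R) (x y : E) :
    ‖a • x - b • y‖ ≤ ‖a‖ * ‖x - y‖ + ‖a - b‖ * ‖y‖ := by
  have hsplit : a • x - b • y = a • (x - y) + (a - b) • y := by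
    rw [smul_sub, sub_smul, sub_add_sub_cancel]
  rw [hsplit]
  exact (norm_add_le _ _).trans (add_le_add (norm_smul_le _ _) (norm_smul_le _ _))

theorem norm_deriv_comp_sub_deriv_comp_le {𝕜 E : Type*} [RCLike 𝕜] [NormedAddCommGroup E]
    [NormedSpace 𝕜 E] {H : 𝕜 → E} {S : Set 𝕜} {l₁ l₂ : ℝ} (hS : Convex ℝ S)
    (hH : ∀ u ∈ S, DifferentiableAt 𝕜 H u) (hH_bound : ∀ u ∈ S, ‖deriv H u‖ ≤ l₁)
    (hH' : ∀ u ∈ S, DifferentiableAt 𝕜 (deriv H) u)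
    (hH'_bound : ∀ u ∈ S, ‖deriv (deriv H) u‖ ≤ l₂)
    {φ ψ : 𝕜 → 𝕜} {φ' ψ' t : 𝕜} (hφ : HasDerivAt φ φ' t) (hψ : HasDerivAt ψ ψ' t)
    (hφS : φ t ∈ S) (hψS : ψ t ∈ S) :
    ‖deriv (H ∘ φ) t - deriv (H ∘ ψ) t‖ ≤ ‖φ'‖ * (l₂ * ‖φ t - ψ t‖) + ‖φ' - ψ'‖ * l₁ := by
  rw [((hH _ hφS).hasDerivAt.scomp t hφ).deriv, ((hH _ hψS).hasDerivAt.scomp t hψ).deriv]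
  calc ‖φ' • deriv H (φ t) - ψ' • deriv H (ψ t)‖
      ≤ ‖φ'‖ * ‖deriv H (φ t) - deriv H (ψ t)‖ + ‖φ' - ψ'‖ * ‖deriv H (ψ t)‖ :=
        norm_smul_sub_smul_le _ _ _ _
    _ ≤ ‖φ'‖ * (l₂ * ‖φ t - ψ t‖) + ‖φ' - ψ'‖ * l₁ := by
        gcongr
        · exact hS.norm_image_sub_le_of_norm_deriv_le hH' hH'_bound hψS hφS
        · exact hH_bound _ hψS

section DerivDistance

variable {f g : ℝ → ℝ} {ℓ K c C t : ℝ}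

theorem dd_nonneg (f g : ℝ → ℝ) : 0 ≤ dd f g :=
  Real.iSup_nonneg fun _ => abs_nonneg _

theorem dd_le (h : ∀ t ∈ Set.Ioo (0 : ℝ) (1 / 2), |deriv f t - deriv g t| ≤ C) : dd f g ≤ C :=
  have : Nonempty (Set.Ioo (0 : ℝ) (1 / 2)) := Set.nonempty_Ioo_subtype (by norm_num)
  ciSup_le fun t => h t t.2

theorem memC.abs_deriv_sub_le_dd (hf : memC 0 (1 / 2) ℓ f) (hg : memC 0 (1 / 2) ℓ g)
    (ht : t ∈ Set.Ioo (0 : ℝ) (1 / 2)) : |deriv f t - deriv g t| ≤ dd f g := by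
  refine le_ciSup (f := fun s : Set.Ioo (0 : ℝ) (1 / 2) => |deriv f s - deriv g s|)
    ⟨ℓ + ℓ, ?_⟩ ⟨t, ht⟩
  rintro _ ⟨s, rfl⟩
  exact (abs_sub _ _).trans (add_le_add (hf.2 s s.2).2 (hg.2 s s.2).2)

theorem mem0.abs_sub_le_half_dd (hf : mem0 ℓ K c f) (hg : mem0 ℓ K c g)
    (ht : t ∈ Set.Icc (0 : ℝ) (1 / 2)) : |f t - g t| ≤ dd f g / 2 :=
  calc |f t - g t| ≤ dd f g * (t - 0) :=
        norm_sub_le_of_nnnorm_deriv_sub_le (C := ⟨dd f g, dd_nonneg f g⟩) hf.1.1 hg.1.1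
          (fun s hs => (hf.1.2 s hs).1) (fun s hs => (hg.1.2 s hs).1)
          (hf.2.1.trans hg.2.1.symm) (fun _ hs => hf.1.abs_deriv_sub_le_dd hg.1 hs) ht
    _ ≤ dd f g * (1 / 2) :=
        mul_le_mul_of_nonneg_left (by linarith [ht.2]) (dd_nonneg f g)
    _ = dd f g / 2 := mul_one_div _ _

theorem mem0.bound_nonneg (hf : mem0 ℓ K c f) : 0 ≤ K :=
  (abs_nonneg _).trans (hf.2.2 0 (by norm_num))

end DerivDistance

theorem abs_one_add_mul_le {ε x ℓ : ℝ} (hx : |x| ≤ ℓ) : |1 + ε * x| ≤ 1 + |ε| * ℓ :=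
  calc |1 + ε * x| ≤ |1| + |ε * x| := abs_add_le _ _
    _ = 1 + |ε| * |x| := by rw [abs_one, abs_mul]
    _ ≤ 1 + |ε| * ℓ := by gcongr

section DelayedTime

/-- The state-dependent delayed time `s - 1 + ε w(s)`, so that the paper's `G_w` is
`F ∘ z ∘ delayedTime ε w`. -/
def delayedTime (ε : ℝ) (w : ℝ → ℝ) (s : ℝ) : ℝ := s - 1 + ε * w s

variable {ε ℓ K c t : ℝ} {w : ℝ → ℝ}

theorem delayedTime_sub_delayedTime (ε : ℝ) (w₁ w₂ : ℝ → ℝ) (t : ℝ) :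
    delayedTime ε w₁ t - delayedTime ε w₂ t = ε * (w₁ t - w₂ t) := by
  unfold delayedTime
  ring

theorem hasDerivAt_delayedTime (ε : ℝ) (hw : DifferentiableAt ℝ w t) :
    HasDerivAt (delayedTime ε w) (1 + ε * deriv w t) t :=
  ((hasDerivAt_id t).sub_const 1).add (hw.hasDerivAt.const_mul ε)

theorem mem0.delayedTime_mem_Ioo (hw : mem0 ℓ K c w) (hε : |ε| * K ≤ 1 / 2)
    (ht : t ∈ Set.Ioo (0 : ℝ) (1 / 2)) : delayedTime ε w t ∈ Set.Ioo (-(3 / 2) : ℝ) 0 := by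
  have hεw : |ε * w t| ≤ 1 / 2 :=
    calc |ε * w t| = |ε| * |w t| := abs_mul _ _
      _ ≤ |ε| * K := by gcongr; exact hw.2.2 t (Set.Ioo_subset_Icc_self ht)
      _ ≤ 1 / 2 := hε
  obtain ⟨hlower, hupper⟩ := abs_le.1 hεw
  unfold delayedTime
  constructor <;> linarith [ht.1, ht.2]

end DelayedTime

theorem dd_Gw_estimate_general {H : ℝ → ℝ} {ε ℓ K c l₁ l₂ : ℝ}
    (hH : ∀ u ∈ Set.Ioo (-(3 / 2) : ℝ) 0,
      DifferentiableAt ℝ H u ∧ |deriv H u| ≤ l₁ ∧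
        DifferentiableAt ℝ (deriv H) u ∧ |deriv (deriv H) u| ≤ l₂)
    (hε : |ε| * K ≤ 1 / 2) {w₁ w₂ : ℝ → ℝ} (hw₁ : mem0 ℓ K c w₁) (hw₂ : mem0 ℓ K c w₂) :
    dd (H ∘ delayedTime ε w₁) (H ∘ delayedTime ε w₂) ≤
      |ε| * ((1 + |ε| * ℓ) * l₂ / 2 + l₁) * dd w₁ w₂ := by
  refine dd_le fun t ht => ?_
  obtain ⟨hw₁_diff, hw₁_bound⟩ := hw₁.1.2 t ht
  have hmem₁ := hw₁.delayedTime_mem_Ioo hε ht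
  have hl₁ : 0 ≤ l₁ := (abs_nonneg _).trans (hH _ hmem₁).2.1
  have hl₂ : 0 ≤ l₂ := (abs_nonneg _).trans (hH _ hmem₁).2.2.2
  have hspeed : |1 + ε * deriv w₁ t| ≤ 1 + |ε| * ℓ := abs_one_add_mul_le hw₁_bound
  have hvalue : |w₁ t - w₂ t| ≤ dd w₁ w₂ / 2 :=
    hw₁.abs_sub_le_half_dd hw₂ (Set.Ioo_subset_Icc_self ht)
  have hderiv : |deriv w₁ t - deriv w₂ t| ≤ dd w₁ w₂ := hw₁.1.abs_deriv_sub_le_dd hw₂.1 ht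
  calc |deriv (H ∘ delayedTime ε w₁) t - deriv (H ∘ delayedTime ε w₂) t|
      ≤ |1 + ε * deriv w₁ t| * (l₂ * |delayedTime ε w₁ t - delayedTime ε w₂ t|) +
          |(1 + ε * deriv w₁ t) - (1 + ε * deriv w₂ t)| * l₁ :=
        norm_deriv_comp_sub_deriv_comp_le (convex_Ioo _ _) (fun u hu => (hH u hu).1)
          (fun u hu => (hH u hu).2.1) (fun u hu => (hH u hu).2.2.1)
          (fun u hu => (hH u hu).2.2.2) (hasDerivAt_delayedTime ε hw₁_diff)
          (hasDerivAt_delayedTime ε (hw₂.1.2 t ht).1) hmem₁ (hw₂.delayedTime_mem_Ioo hε ht)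
    _ = |1 + ε * deriv w₁ t| * (l₂ * (|ε| * |w₁ t - w₂ t|)) +
          |ε| * |deriv w₁ t - deriv w₂ t| * l₁ := by
        rw [delayedTime_sub_delayedTime, add_sub_add_left_eq_sub, ← mul_sub, abs_mul, abs_mul]
    _ ≤ (1 + |ε| * ℓ) * (l₂ * (|ε| * (dd w₁ w₂ / 2))) + |ε| * dd w₁ w₂ * l₁ := by
        gcongr
        exact (abs_nonneg _).trans hspeed
    _ = |ε| * ((1 + |ε| * ℓ) * l₂ / 2 + l₁) * dd w₁ w₂ := by ring

/-- if `ℓ ≥ 2τK₀`, `|ε| ≤ 1/(2K₂)` (here `K₂ = M + τK₀`), and `z` is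
twice differentiable on `(-3/2,0)` with `H = F ∘ z` satisfying `|H'| ≤ l₁`,
`|H''| ≤ l₂` there, then for all `w₁, w₂ ∈ C^{0,ℓ}_0([0,1/2])`,
`d(G_{w₁}, G_{w₂}) ≤ |ε| 𝐋 d(w₁,w₂)` with `𝐋 = (1 + |ε|ℓ) l₂/2 + l₁`. -/
theorem dd_Gw_estimate
    (τ M ℓ ε K₀ K₂ l₁ l₂ : ℝ) (F z : ℝ → ℝ)
    (hτ : 0 < τ) (hM : 1 < M) (hℓpos : 0 < ℓ)
    (hF : ContDiff ℝ 1 F)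
    (hK₀ : K₀ = ⨆ ξ : Set.Icc (-M) M, |F ξ.1|)
    (hK₂ : K₂ = M + τ * K₀)
    (hz : memC (-(3 / 2)) 0 ℓ z)
    (hzM : ∀ t ∈ Set.Icc (-(3 / 2) : ℝ) 0, |z t| ≤ M)
    (hz2 : ∀ u ∈ Set.Ioo (-(3 / 2) : ℝ) 0,
      DifferentiableAt ℝ z u ∧ DifferentiableAt ℝ (deriv z) u)
    (hH : ∀ u ∈ Set.Ioo (-(3 / 2) : ℝ) 0,
      DifferentiableAt ℝ (fun v => F (z v)) u ∧
        |deriv (fun v => F (z v)) u| ≤ l₁ ∧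
        DifferentiableAt ℝ (deriv (fun v => F (z v))) u ∧
        |deriv (deriv (fun v => F (z v))) u| ≤ l₂)
    (hℓ : 2 * τ * K₀ ≤ ℓ)
    (hε : |ε| ≤ 1 / (2 * K₂))
    (w₁ w₂ : ℝ → ℝ) (hw₁ : mem0 ℓ K₂ (z 0) w₁) (hw₂ : mem0 ℓ K₂ (z 0) w₂) :
    dd (fun s => F (z (s - 1 + ε * w₁ s))) (fun s => F (z (s - 1 + ε * w₂ s))) ≤
      |ε| * ((1 + |ε| * ℓ) * l₂ / 2 + l₁) * dd w₁ w₂ := by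
  have hεK₂ : |ε| * K₂ ≤ 1 / 2 :=
    mul_le_of_le_div₀ (by norm_num) hw₁.bound_nonneg (by rwa [div_div])
  exact dd_Gw_estimate_general (H := fun v => F (z v)) hH hεK₂ hw₁ hw₂
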